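/- Let f=(m,n,k) and g=(m',n',k') be integer binary quadratic forms with the same discriminant Δ>0 not a perfect square, and suppose f and g are SL(2,ℤ)-equivalent. Then the period of the continued fraction expansion of ξ⁺(f) equals the period of the continued fraction expansion of ξ⁺(g) up to cyclic permutation, and likewise the periods of the expansions of ξ⁻(f) and ξ⁻(g) coincide up to cyclic permutation. -/

import Mathlib

/-!
Call two reals tail-equivalent if some complete quotient of one is a complete quotient of the other.
Shifting the start of the expansion changes neither the periods nor their minimality, so
tail-equivalent reals have the same periods. By Serret's theorem, an irrational `ξ` is
tail-equivalent to `(aξ + b) / (cξ + d)` whenever `ad - bc = ±1`: Euclid's algorithm on `(a, c)`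
reduces this to `ξ ↦ ξ + q`, `ξ ↦ -ξ` and `ξ ↦ 1/ξ`. An `SL(2,ℤ)` substitution moves `ξ⁺` by
such a transformation, and the case of `ξ⁻` follows because `ξ⁻(f) = ξ⁺(-f)`.
-/

/-- Iterates of the Gauss map starting from `ξ`. -/
noncomputable def gaussIter (ξ : ℝ) : ℕ → ℝ
  | 0 => ξ
  | n + 1 => 1 / (gaussIter ξ n - (⌊gaussIter ξ n⌋ : ℝ))

/-- The `n`-th partial quotient of the regular continued fraction expansion of `ξ`. -/
noncomputable def cfTerm (ξ : ℝ) (n : ℕ) : ℤ := ⌊gaussIter ξ n⌋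

/-- The continued fraction expansion of `ξ` is periodic with period length `P` from index `N`. -/
def IsEventuallyPeriodicCF (ξ : ℝ) (N P : ℕ) : Prop :=
  1 ≤ P ∧ ∀ j : ℕ, cfTerm ξ (N + j + P) = cfTerm ξ (N + j)

/-- `s` is the (minimal) period of the eventually periodic regular continued fraction
expansion of `ξ`; it is well defined up to cyclic permutation. -/
def IsCFPeriod (s : List ℤ) (ξ : ℝ) : Prop :=
  s ≠ [] ∧
  (∃ N : ℕ, ∀ j : ℕ, cfTerm ξ (N + j) = s.getD (j % s.length) 0) ∧
  (∀ P : ℕ, 1 ≤ P → (∃ N : ℕ, IsEventuallyPeriodicCF ξ N P) → s.length ≤ P)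

/-- The value of the binary quadratic form `f = (m, n, k)`, i.e. `m*x^2 + n*y^2 + k*x*y`. -/
def qval (f : ℤ × ℤ × ℤ) (x y : ℤ) : ℤ := f.1 * x ^ 2 + f.2.1 * y ^ 2 + f.2.2 * x * y

/-- The discriminant `k^2 - 4*m*n` of the form `f = (m, n, k)`. -/
def formDisc (f : ℤ × ℤ × ℤ) : ℤ := f.2.2 ^ 2 - 4 * f.1 * f.2.1

/-- `SL(2,ℤ)`-equivalence of binary quadratic forms. -/
def SLEquiv (f g : ℤ × ℤ × ℤ) : Prop :=
  ∃ a b c d : ℤ, a * d - b * c = 1 ∧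
    ∀ x y : ℤ, qval g x y = qval f (a * x + b * y) (c * x + d * y)

/-- The root with the plus sign of `m*ξ^2 + k*ξ + n = 0`, for `f = (m, n, k)`. -/
noncomputable def xiPlus (f : ℤ × ℤ × ℤ) : ℝ :=
  (-(f.2.2 : ℝ) + Real.sqrt ((formDisc f : ℤ) : ℝ)) / (2 * (f.1 : ℝ))

/-- The root with the minus sign of `m*ξ^2 + k*ξ + n = 0`, for `f = (m, n, k)`. -/
noncomputable def xiMinus (f : ℤ × ℤ × ℤ) : ℝ :=
  (-(f.2.2 : ℝ) - Real.sqrt ((formDisc f : ℤ) : ℝ)) / (2 * (f.1 : ℝ))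

/-- The conjugate `(m, n, -k)` of the form `(m, n, k)`. -/
def conjF (f : ℤ × ℤ × ℤ) : ℤ × ℤ × ℤ := (f.1, f.2.1, -f.2.2)

/-- The adjoint `(-n, -m, k)` of the form `(m, n, k)`. -/
def adjF (f : ℤ × ℤ × ℤ) : ℤ × ℤ × ℤ := (-f.2.1, -f.1, f.2.2)

/-- The antipodal `(-n, -m, -k)` of the form `(m, n, k)`. -/
def antipF (f : ℤ × ℤ × ℤ) : ℤ × ℤ × ℤ := (-f.2.1, -f.1, -f.2.2)

/-- A form `(m, n, k)` is primitive if `gcd(m, n, k) = 1`. -/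
def IsPrimitiveForm (f : ℤ × ℤ × ℤ) : Prop := Int.gcd f.1 (Int.gcd f.2.1 f.2.2) = 1

theorem gaussIter_add (ξ : ℝ) (N j : ℕ) :
    gaussIter ξ (N + j) = gaussIter (gaussIter ξ N) j := by
  induction j with
  | zero => rfl
  | succ j ih => rw [← add_assoc]; simp only [gaussIter, ih]

theorem cfTerm_gaussIter (ξ : ℝ) (N j : ℕ) : cfTerm (gaussIter ξ N) j = cfTerm ξ (N + j) := by
  rw [cfTerm, cfTerm, gaussIter_add]

/-- Tail equivalence: `ξ` and `η` have a common complete quotient, so that their continued fraction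
expansions agree after deleting an initial segment of each. -/
def TailEq (ξ η : ℝ) : Prop := ∃ N M : ℕ, gaussIter ξ N = gaussIter η M

namespace TailEq

theorem refl (ξ : ℝ) : TailEq ξ ξ := ⟨0, 0, rfl⟩

theorem symm {ξ η : ℝ} : TailEq ξ η → TailEq η ξ
  | ⟨N, M, h⟩ => ⟨M, N, h.symm⟩

theorem trans {ξ η ζ : ℝ} : TailEq ξ η → TailEq η ζ → TailEq ξ ζ
  | ⟨N, M, h⟩, ⟨M', L, h'⟩ => ⟨N + M', L + M, by
      rw [gaussIter_add, h, ← gaussIter_add, add_comm M M', gaussIter_add, h', ← gaussIter_add]⟩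

instance : Trans TailEq TailEq TailEq := ⟨trans⟩

theorem add_intCast (ξ : ℝ) (q : ℤ) : TailEq ξ (ξ + q) :=
  ⟨1, 1, by simp [gaussIter]⟩

theorem inv_of_pos {ξ : ℝ} (hξ : 0 < ξ) : TailEq ξ ξ⁻¹ := by
  have inv_of_lt_one {x : ℝ} (h0 : 0 < x) (h1 : x < 1) : TailEq x x⁻¹ := by
    have hfloor : ⌊x⌋ = 0 := Int.floor_eq_zero_iff.2 ⟨h0.le, h1⟩
    exact ⟨1, 0, by simp [gaussIter, hfloor]⟩
  rcases lt_trichotomy ξ 1 with h | rfl | h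
  · exact inv_of_lt_one hξ h
  · simpa using refl 1
  · simpa using (inv_of_lt_one (inv_pos.2 hξ) (inv_lt_one_of_one_lt₀ h)).symm

theorem one_sub {ξ : ℝ} (h0 : 0 < ξ) (h1 : ξ < 1) : TailEq ξ (1 - ξ) := by
  have h1' : 0 < 1 - ξ := sub_pos.2 h1
  calc
    TailEq ξ ξ⁻¹ := inv_of_pos h0
    TailEq _ ((1 - ξ) / ξ) := by
      convert add_intCast ξ⁻¹ (-1) using 1
      push_cast
      field_simp
      ring
    TailEq _ (ξ / (1 - ξ)) := by
      simpa only [inv_div] using inv_of_pos (div_pos h1' h0)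
    TailEq _ (1 - ξ)⁻¹ := by
      convert add_intCast (ξ / (1 - ξ)) 1 using 1
      push_cast
      field_simp
      ring
    TailEq _ (1 - ξ) := (inv_of_pos h1').symm

theorem neg (ξ : ℝ) : TailEq ξ (-ξ) := by
  have hξ : Int.fract ξ + ⌊ξ⌋ = ξ := Int.fract_add_floor ξ
  rcases (Int.fract_nonneg ξ).eq_or_lt with hfract | hfract
  · convert add_intCast ξ (-2 * ⌊ξ⌋) using 1
    push_cast
    linarith
  · calc
      TailEq ξ (Int.fract ξ) := by simpa only [hξ] using (add_intCast (Int.fract ξ) ⌊ξ⌋).symm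
      TailEq _ (1 - Int.fract ξ) := one_sub hfract (Int.fract_lt_one ξ)
      TailEq _ (-ξ) := by
        convert add_intCast (1 - Int.fract ξ) (-1 - ⌊ξ⌋) using 1
        push_cast
        linarith

theorem inv (ξ : ℝ) : TailEq ξ ξ⁻¹ := by
  rcases lt_trichotomy ξ 0 with h | rfl | h
  · calc
      TailEq ξ (-ξ) := neg ξ
      TailEq _ (-ξ)⁻¹ := inv_of_pos (neg_pos.2 h)
      TailEq _ ξ⁻¹ := by simpa only [inv_neg, neg_neg] using neg (-ξ)⁻¹
  · simpa using refl 0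
  · exact inv_of_pos h

end TailEq

theorem intCast_mul_add_intCast_ne_zero {ξ : ℝ} (hξ : Irrational ξ) {c d : ℤ}
    (hcd : c ≠ 0 ∨ d ≠ 0) : (c : ℝ) * ξ + d ≠ 0 := by
  rcases eq_or_ne c 0 with rfl | hc
  · simpa using hcd
  · exact ((hξ.intCast_mul hc).add_intCast d).ne_zero

/-- **Serret's theorem**, in the direction from Möbius equivalence to tail equivalence. -/
theorem TailEq.moebius {ξ : ℝ} (hξ : Irrational ξ) (a b c d : ℤ) (hdet : IsUnit (a * d - b * c)) :
    TailEq ξ ((a * ξ + b) / (c * ξ + d)) := by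
  induction c, a using EuclideanDomain.GCD.induction generalizing b d with
  | H0 a =>
    have hdet' : IsUnit (a * d) := by simpa using hdet
    have hd : ((d : ℝ) = 1) ∨ (d : ℝ) = -1 := by
      exact_mod_cast Int.isUnit_iff.1 (isUnit_of_mul_isUnit_right hdet')
    have hdiv : (a * ξ + b) / ((0 : ℤ) * ξ + d) = ((a * d : ℤ) : ℝ) * ξ + ((b * d : ℤ) : ℝ) := by
      rcases hd with hd | hd <;> push_cast <;> rw [hd] <;> ring
    rw [hdiv]
    rcases Int.isUnit_iff.1 hdet' with h | h
    · simpa [h] using add_intCast ξ (b * d)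
    · simpa [h] using (neg ξ).trans (add_intCast (-ξ) (b * d))
  | H1 c a hc ih =>
    have hdiv : c * (a / c) + a % c = a := EuclideanDomain.div_add_mod a c
    have hdet' : IsUnit (c * (b - a / c * d) - d * (a % c)) := by
      convert hdet.neg using 1
      linear_combination -d * hdiv
    have hden : (c : ℝ) * ξ + d ≠ 0 := intCast_mul_add_intCast_ne_zero hξ (.inl hc)
    calc
      TailEq ξ ((c * ξ + d) / ((a % c : ℤ) * ξ + (b - a / c * d : ℤ))) := ih _ _ hdet'
      TailEq _ (((a % c : ℤ) * ξ + (b - a / c * d : ℤ)) / (c * ξ + d)) := by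
        simpa only [inv_div] using
          inv ((c * ξ + d) / ((a % c : ℤ) * ξ + (b - a / c * d : ℤ)))
      TailEq _ ((a * ξ + b) / (c * ξ + d)) := by
        convert add_intCast _ (a / c) using 1
        rw [div_add' _ _ _ hden]
        congr 1
        have hdivR : (c : ℝ) * (a / c : ℤ) + (a % c : ℤ) = a := by exact_mod_cast hdiv
        push_cast
        linear_combination -ξ * hdivR

theorem exists_isEventuallyPeriodicCF_gaussIter {ξ : ℝ} {M P : ℕ} :
    (∃ N, IsEventuallyPeriodicCF (gaussIter ξ M) N P) ↔ ∃ N, IsEventuallyPeriodicCF ξ N P := by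
  constructor
  · rintro ⟨N, hP, h⟩
    exact ⟨M + N, hP, fun j => by simpa only [cfTerm_gaussIter, add_assoc] using h j⟩
  · rintro ⟨N, hP, h⟩
    refine ⟨N, hP, fun j => ?_⟩
    simpa only [cfTerm_gaussIter, add_assoc, add_left_comm] using h (M + j)

theorem isCFPeriod_gaussIter {s : List ℤ} {ξ : ℝ} {M : ℕ} :
    IsCFPeriod s (gaussIter ξ M) ↔ IsCFPeriod s ξ := by
  simp only [IsCFPeriod, exists_isEventuallyPeriodicCF_gaussIter, cfTerm_gaussIter]
  refine and_congr_right fun hs => and_congr_left fun _ => ⟨?_, ?_⟩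
  · rintro ⟨N, h⟩
    exact ⟨M + N, fun j => by rw [add_assoc, h]⟩
  · rintro ⟨N, h⟩
    -- Skipping `M` whole periods of `ξ` from `N` on keeps the phase of `s` and passes index `M`.
    refine ⟨N + M * (s.length - 1), fun j => ?_⟩
    have hlen : s.length - 1 + 1 = s.length := Nat.sub_add_cancel (List.length_pos_iff.2 hs)
    have hindex : M + (N + M * (s.length - 1) + j) = N + (j + M * s.length) := by
      rw [← hlen, Nat.add_sub_cancel]
      ring
    rw [hindex, h, Nat.add_mul_mod_self_right]

theorem TailEq.isCFPeriod_iff {ξ η : ℝ} {s : List ℤ} (h : TailEq ξ η) :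
    IsCFPeriod s ξ ↔ IsCFPeriod s η := by
  obtain ⟨N, M, h⟩ := h
  rw [← isCFPeriod_gaussIter (M := N), h, isCFPeriod_gaussIter]

namespace IsCFPeriod

variable {s s' : List ℤ} {ξ : ℝ}

theorem exists_isEventuallyPeriodicCF (h : IsCFPeriod s ξ) :
    ∃ N, IsEventuallyPeriodicCF ξ N s.length := by
  obtain ⟨hs, ⟨N, hN⟩, -⟩ := h
  exact ⟨N, List.length_pos_iff.2 hs, fun j => by rw [add_assoc, hN, hN, Nat.add_mod_right]⟩

theorem length_le (h : IsCFPeriod s ξ) (h' : IsCFPeriod s' ξ) : s.length ≤ s'.length :=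
  h.2.2 _ (List.length_pos_iff.2 h'.1) h'.exists_isEventuallyPeriodicCF

theorem isRotated (h : IsCFPeriod s ξ) (h' : IsCFPeriod s' ξ) : s ~r s' := by
  have hlen : s.length = s'.length := (h.length_le h').antisymm (h'.length_le h)
  obtain ⟨-, ⟨N, hN⟩, -⟩ := h
  obtain ⟨-, ⟨N', hN'⟩, -⟩ := h'
  have hrotate : s.rotate N' = s'.rotate N := by
    refine List.ext_getElem (by simpa using hlen) fun j _ _ => ?_
    rw [List.getElem_rotate, List.getElem_rotate,
      ← List.getD_eq_getElem _ 0, ← List.getD_eq_getElem _ 0, ← hN, ← hN', add_left_comm,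
      add_left_comm N', add_comm N]
  exact (List.IsRotated.forall s N').symm.trans (hrotate ▸ List.IsRotated.forall s' N)

end IsCFPeriod

section BinaryQuadraticForm

variable {f g : ℤ × ℤ × ℤ}

theorem qval_neg (f : ℤ × ℤ × ℤ) (x y : ℤ) : qval (-f) x y = -qval f x y := by
  simp only [qval, Prod.fst_neg, Prod.snd_neg]
  ring

theorem SLEquiv.neg : SLEquiv f g → SLEquiv (-f) (-g)
  | ⟨a, b, c, d, hdet, h⟩ => ⟨a, b, c, d, hdet, fun x y => by rw [qval_neg, qval_neg, h]⟩

theorem SLEquiv.exists_coeff_eq {m n k m' n' k' : ℤ} (h : SLEquiv (m, n, k) (m', n', k')) :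
    ∃ a b c d : ℤ, a * d - b * c = 1 ∧
      m' = m * a ^ 2 + n * c ^ 2 + k * a * c ∧
      n' = m * b ^ 2 + n * d ^ 2 + k * b * d ∧
      k' = 2 * m * a * b + 2 * n * c * d + k * (a * d + b * c) := by
  obtain ⟨a, b, c, d, hdet, h⟩ := h
  have h10 := h 1 0
  have h01 := h 0 1
  have h11 := h 1 1
  simp only [qval] at h10 h01 h11
  exact ⟨a, b, c, d, hdet, by linear_combination h10, by linear_combination h01,
    by linear_combination h11 - h10 - h01⟩

theorem SLEquiv.formDisc_eq (h : SLEquiv f g) : formDisc f = formDisc g := by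
  obtain ⟨a, b, c, d, hdet, hm, hn, hk⟩ := h.exists_coeff_eq
  simp only [formDisc, hm, hn, hk]
  linear_combination -(f.2.2 ^ 2 - 4 * f.1 * f.2.1) * (a * d - b * c + 1) * hdet

theorem formDisc_neg (f : ℤ × ℤ × ℤ) : formDisc (-f) = formDisc f := by
  simp only [formDisc, Prod.fst_neg, Prod.snd_neg]
  ring

theorem xiPlus_neg (f : ℤ × ℤ × ℤ) : xiPlus (-f) = xiMinus f := by
  rw [xiPlus, xiMinus, formDisc_neg, ← neg_div_neg_eq]
  simp only [Prod.fst_neg, Prod.snd_neg, Int.cast_neg]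
  ring

theorem fst_ne_zero_of_not_isSquare_formDisc (hsq : ¬IsSquare (formDisc f)) :
    f.1 ≠ 0 := fun h => hsq ⟨f.2.2, by simp [formDisc, h, sq]⟩

theorem irrational_xiPlus (hnonneg : 0 ≤ formDisc f) (hsq : ¬IsSquare (formDisc f)) :
    Irrational (xiPlus f) := by
  have hsqrt : Irrational √(formDisc f : ℝ) := irrational_sqrt_intCast_iff.2 ⟨hsq, hnonneg⟩
  have hf := fst_ne_zero_of_not_isSquare_formDisc hsq
  simpa only [xiPlus, Int.cast_neg, Int.cast_mul, Int.cast_ofNat] using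
    (hsqrt.intCast_add (-f.2.2)).div_intCast (mul_ne_zero two_ne_zero hf)

theorem two_mul_xiPlus_add (hf : f.1 ≠ 0) :
    2 * f.1 * xiPlus f + f.2.2 = √(formDisc f : ℝ) := by
  have hfR : (f.1 : ℝ) ≠ 0 := by exact_mod_cast hf
  rw [xiPlus]
  field_simp
  ring

theorem xiPlus_isRoot (hnonneg : 0 ≤ formDisc f) (hf : f.1 ≠ 0) :
    f.1 * xiPlus f ^ 2 + f.2.2 * xiPlus f + f.2.1 = 0 := by
  have hfR : (f.1 : ℝ) ≠ 0 := by exact_mod_cast hf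
  have hsqrt : √(formDisc f : ℝ) ^ 2 = (f.2.2 : ℝ) ^ 2 - 4 * f.1 * f.2.1 := by
    rw [Real.sq_sqrt (by exact_mod_cast hnonneg), formDisc]
    push_cast
    rfl
  rw [← two_mul_xiPlus_add hf] at hsqrt
  refine mul_left_cancel₀ (mul_ne_zero four_ne_zero hfR) ?_
  linear_combination hsqrt

theorem SLEquiv.tailEq_xiPlus (h : SLEquiv f g) (hnonneg : 0 ≤ formDisc f)
    (hsq : ¬IsSquare (formDisc f)) : TailEq (xiPlus f) (xiPlus g) := by
  have hξ := irrational_xiPlus hnonneg hsq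
  have hf := fst_ne_zero_of_not_isSquare_formDisc hsq
  have hg : (g.1 : ℝ) ≠ 0 := by
    exact_mod_cast fst_ne_zero_of_not_isSquare_formDisc (h.formDisc_eq ▸ hsq)
  have hsqrt := two_mul_xiPlus_add hf
  have hroot := xiPlus_isRoot hnonneg hf
  obtain ⟨a, b, c, d, hdet, hm, -, hk⟩ := h.exists_coeff_eq
  have hac : -c ≠ 0 ∨ a ≠ 0 := by
    by_contra! hzero
    simp [neg_eq_zero.1 hzero.1, hzero.2] at hdet
  have hden := intCast_mul_add_intCast_ne_zero hξ hac
  -- The roots are moved by the inverse of the substitution matrix.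
  have hmoebius : xiPlus g = ((d : ℤ) * xiPlus f + (-b : ℤ)) / ((-c : ℤ) * xiPlus f + a) := by
    have hdetR : (a : ℝ) * d - b * c = 1 := by exact_mod_cast hdet
    have hxig : xiPlus g = (-(g.2.2 : ℝ) + √(formDisc g : ℝ)) / (2 * g.1) := rfl
    rw [hxig, ← h.formDisc_eq, ← hsqrt, div_eq_div_iff (mul_ne_zero two_ne_zero hg) hden, hm, hk]
    push_cast
    linear_combination -(2 * f.1 * xiPlus f + f.2.2) * (a - c * xiPlus f) * hdetR -
      2 * c * (a * d - b * c) * hroot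
  rw [hmoebius]
  exact .moebius hξ d (-b) (-c) a (Int.isUnit_iff.2 (.inl (by linear_combination hdet)))

theorem SLEquiv.tailEq_xiMinus (h : SLEquiv f g) (hnonneg : 0 ≤ formDisc f)
    (hsq : ¬IsSquare (formDisc f)) : TailEq (xiMinus f) (xiMinus g) := by
  rw [← formDisc_neg] at hnonneg hsq
  simpa only [xiPlus_neg] using h.neg.tailEq_xiPlus hnonneg hsq

end BinaryQuadraticForm

/-- The period of the continued fraction of `ξ⁺` (resp. `ξ⁻`) is, up to cyclic
permutation, an invariant of the `SL(2,ℤ)`-class of the form. -/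
theorem statement1 (m n k m' n' k' : ℤ)
    (hpos : 0 < formDisc (m, n, k)) (hsq : ¬ IsSquare (formDisc (m, n, k)))
    (hdisc : formDisc (m, n, k) = formDisc (m', n', k'))
    (hequiv : SLEquiv (m, n, k) (m', n', k')) :
    (∀ s s' : List ℤ, IsCFPeriod s (xiPlus (m, n, k)) → IsCFPeriod s' (xiPlus (m', n', k')) →
      List.IsRotated s s') ∧
    (∀ t t' : List ℤ, IsCFPeriod t (xiMinus (m, n, k)) → IsCFPeriod t' (xiMinus (m', n', k')) →
      List.IsRotated t t') := by
  have hplus := hequiv.tailEq_xiPlus hpos.le hsq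
  have hminus := hequiv.tailEq_xiMinus hpos.le hsq
  exact ⟨fun _ _ hs hs' => (hplus.isCFPeriod_iff.1 hs).isRotated hs',
    fun _ _ ht ht' => (hminus.isCFPeriod_iff.1 ht).isRotated ht'⟩
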